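/- arXiv:2405.21064 — 2 statements merged into one kernel-verified Lean document; each statement's English description precedes it below -/
import Mathlib

section
/- Let α, β ∈ ℂ with |α| < 1 and |β| < 1, and let u : ℤ → ℂ be a bounded sequence satisfying u_{-n} = u_n for all n. Then the doubly indexed series ∑_{n≥0} ∑_{m≥0} α^n β^m u_{n-m} converges absolutely and equals (1/(1-αβ)) · (u_0 + ∑_{Δ≥1} (α^Δ + β^Δ) u_Δ). -/
/-!
Write `f (n, m) = α ^ n * β ^ m * u (n - m)`. Absolute convergence is domination by the product of
two geometric series. For the value, `f (n + 1, m + 1) = α β f (n, m)`, since a diagonal shift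
leaves `n - m` unchanged. Splitting the quadrant `ℕ × ℕ` into its corner, its two axes and the
shifted quadrant gives `S = (u 0 + ∑ α ^ Δ u Δ + ∑ β ^ Δ u Δ) + α β S`, with the symmetry of `u`
used on the axis `n = 0`; solving for `S` is legitimate because `‖α β‖ < 1`.
-/

/-- A summable series over the quadrant splits into the corner, the two axes without the corner,
and the diagonally shifted quadrant. -/
theorem tsum_quadrant_split {f : ℕ × ℕ → ℂ} (hf : Summable f) :
    ∑' p, f p = f (0, 0) + ∑' n, f (n + 1, 0) + ∑' m, f (0, m + 1) +
      ∑' p : ℕ × ℕ, f (p.1 + 1, p.2 + 1) := by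
  have hshift : Summable (fun p : ℕ × ℕ => f (p.1 + 1, p.2 + 1)) :=
    hf.comp_injective (i := fun p : ℕ × ℕ => (p.1 + 1, p.2 + 1))
      (fun p q h => by simpa [Prod.ext_iff] using h)
  have haxis : Summable (fun n : ℕ => f (n + 1, 0)) :=
    hf.comp_injective (i := fun n : ℕ => (n + 1, 0)) (fun p q h => by simpa using h)
  have hrow (n : ℕ) : ∑' m, f (n, m) = f (n, 0) + ∑' m, f (n, m + 1) :=
    (hf.prod_factor n).tsum_eq_zero_add
  rw [hf.tsum_prod, hf.prod.tsum_eq_zero_add, hshift.tsum_prod]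
  simp only [hrow]
  rw [haxis.tsum_add hshift.prod]
  ring

/-- For `α β : ℂ` with `‖α‖ < 1`, `‖β‖ < 1`, and a bounded symmetric
sequence `u : ℤ → ℂ` (`u (-n) = u n`), the double series `∑_{n,m ≥ 0} α^n β^m u (n - m)`
converges absolutely and equals `(1/(1-αβ)) (u 0 + ∑_{Δ ≥ 1} (α^Δ + β^Δ) u Δ)`. -/
theorem stmt_0 (α β : ℂ) (hα : ‖α‖ < 1) (hβ : ‖β‖ < 1)
    (u : ℤ → ℂ) (hbdd : ∃ C : ℝ, ∀ n : ℤ, ‖u n‖ ≤ C)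
    (hsymm : ∀ n : ℤ, u (-n) = u n) :
    Summable (fun p : ℕ × ℕ => ‖α ^ p.1 * β ^ p.2 * u ((p.1 : ℤ) - (p.2 : ℤ))‖) ∧
      ∑' p : ℕ × ℕ, α ^ p.1 * β ^ p.2 * u ((p.1 : ℤ) - (p.2 : ℤ)) =
        (1 / (1 - α * β)) *
          (u 0 + ∑' Δ : ℕ, (α ^ (Δ + 1) + β ^ (Δ + 1)) * u ((Δ : ℤ) + 1)) := by
  obtain ⟨C, hC⟩ := hbdd
  have habs : Summable
      (fun p : ℕ × ℕ => ‖α ^ p.1 * β ^ p.2 * u ((p.1 : ℤ) - (p.2 : ℤ))‖) := by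
    have hgeom : Summable (fun p : ℕ × ℕ => ‖α‖ ^ p.1 * ‖β‖ ^ p.2) :=
      (summable_geometric_of_lt_one (norm_nonneg α) hα).mul_of_nonneg
        (summable_geometric_of_lt_one (norm_nonneg β) hβ)
        (fun n => by positivity) (fun n => by positivity)
    refine Summable.of_nonneg_of_le (fun p => norm_nonneg _) (fun p => ?_) (hgeom.mul_right C)
    rw [norm_mul, norm_mul, norm_pow, norm_pow]
    exact mul_le_mul_of_nonneg_left (hC _) (by positivity)
  refine ⟨habs, ?_⟩
  have hf := habs.of_norm
  have hαaxis : Summable (fun n : ℕ => α ^ (n + 1) * u ((n : ℤ) + 1)) := by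
    have := hf.comp_injective (i := fun n : ℕ => (n + 1, 0)) (fun p q h => by simpa using h)
    simpa [Function.comp_def] using this
  have hflip (m : ℕ) : u (-1 + -(m : ℤ)) = u ((m : ℤ) + 1) := by
    rw [← hsymm]; congr 1; ring
  have hβaxis : Summable (fun m : ℕ => β ^ (m + 1) * u ((m : ℤ) + 1)) := by
    have := hf.comp_injective (i := fun m : ℕ => (0, m + 1)) (fun p q h => by simpa using h)
    simpa [Function.comp_def, hflip] using this
  have hdiag (p : ℕ × ℕ) :
      α ^ (p.1 + 1) * β ^ (p.2 + 1) * u (((p.1 + 1 : ℕ) : ℤ) - ((p.2 + 1 : ℕ) : ℤ)) =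
        α * β * (α ^ p.1 * β ^ p.2 * u ((p.1 : ℤ) - (p.2 : ℤ))) := by
    rw [show ((p.1 + 1 : ℕ) : ℤ) - ((p.2 + 1 : ℕ) : ℤ) = (p.1 : ℤ) - p.2 by push_cast; ring]
    ring
  have hne : 1 - α * β ≠ 0 := by
    intro h
    have h1 : ‖α * β‖ = 1 := by rw [← sub_eq_zero.mp h, norm_one]
    rw [norm_mul] at h1
    nlinarith [norm_nonneg α, norm_nonneg β]
  have key := tsum_quadrant_split hf
  simp only [hdiag] at key
  rw [tsum_mul_left] at key
  simp only [add_mul]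
  rw [hαaxis.tsum_add hβaxis, one_div, eq_inv_mul_iff_mul_eq₀ hne]
  simp [hflip] at key
  linear_combination key
end

section
/- Let α, β ∈ ℂ with |α| < 1 and |β| < 1, and let u : ℤ → ℂ be a bounded sequence satisfying u_{-n} = u_n for all n. Then the doubly indexed series ∑_{n≥1} ∑_{m≥1} n·m·α^{n-1} β^{m-1} u_{n-m} converges absolutely and equals ((1+αβ)/(1-αβ)^3) · (u_0 + ∑_{Δ≥1} (α^Δ + β^Δ) u_Δ) + (1/(1-αβ)^2) · ∑_{Δ≥1} Δ (α^Δ + β^Δ) u_Δ. -/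
/-!
The double series is dominated by `C` times the product of the absolutely convergent series
`∑ (i + 1) α ^ i` and `∑ (j + 1) β ^ j`, so it may be summed in any order, in particular along
the diagonals `i - j = const`. The half-plane `i ≥ j` is parametrised by `(i, j) = (k + d, k)`
and the half-plane `i < j` by `(i, j) = (k, k + d + 1)` (`diagEquiv`). With `q = α β`, the
diagonal at distance `d` from the main one contributes a `d`-th power of `α` or `β`, times
`u d` (by symmetry of `u`), times
`∑ₖ (k + d + 1) (k + 1) q ^ k = (1 + q) / (1 - q) ^ 3 + d / (1 - q) ^ 2` (`hasSum_diag`).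
Adding the contributions of the two half-planes gives the formula.
-/

/-- The sum along the diagonal at distance `d`: the binomial series for exponents `-2` and `-3`
are combined through `(k + 1) ^ 2 = 2 * (k + 2).choose 2 - (k + 1)`. -/
lemma hasSum_diag {q : ℂ} (hq : ‖q‖ < 1) (d : ℂ) :
    HasSum (fun k : ℕ => ((k : ℂ) + d + 1) * ((k : ℂ) + 1) * q ^ k)
      ((1 + q) / (1 - q) ^ 3 + d * (1 / (1 - q) ^ 2)) := by
  have h1 := hasSum_choose_mul_geometric_of_norm_lt_one 1 hq
  have h2 := hasSum_choose_mul_geometric_of_norm_lt_one 2 hq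
  have hne : (1 - q) ≠ 0 := by
    intro h
    have : q = 1 := (sub_eq_zero.mp h).symm
    simp [this] at hq
  have hval : (1 + q) / (1 - q) ^ 3 + d * (1 / (1 - q) ^ 2) =
      2 * (1 / (1 - q) ^ (2 + 1)) + (d - 1) * (1 / (1 - q) ^ (1 + 1)) := by
    field_simp
    ring
  rw [hval]
  refine ((h2.mul_left 2).add (h1.mul_left (d - 1))).congr_fun fun k => ?_
  rw [Nat.cast_choose_two, Nat.choose_one_right]
  push_cast
  ring

/-- The quadrant `ℕ × ℕ` split into the points on or below the diagonal, `(k + d, k)`, and the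
points strictly above it, `(k, k + d + 1)`; in both halves the parameter is the pair `(d, k)`. -/
def diagEquiv : (ℕ × ℕ) ⊕ (ℕ × ℕ) ≃ ℕ × ℕ where
  toFun := Sum.elim (fun p => (p.2 + p.1, p.2)) (fun p => (p.2, p.2 + p.1 + 1))
  invFun p := if p.2 ≤ p.1 then Sum.inl (p.1 - p.2, p.2) else Sum.inr (p.2 - p.1 - 1, p.1)
  left_inv := by
    rintro (⟨d, k⟩ | ⟨d, k⟩)
    · simp
    · have h : ¬ (k + d + 1 ≤ k) := by omega
      have h' : k + d + 1 - k - 1 = d := by omega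
      simp only [Sum.elim_inr, if_neg h, h']
  right_inv := by
    rintro ⟨i, j⟩
    by_cases h : j ≤ i
    · simp [h]
    · simp only [if_neg h, Sum.elim_inr, Prod.mk.injEq, true_and]
      omega

lemma summable_norm_add_one_mul_pow {x : ℂ} (hx : ‖x‖ < 1) :
    Summable (fun k : ℕ => ‖((k : ℂ) + 1) * x ^ k‖) := by
  have h1 := summable_norm_pow_mul_geometric_of_norm_lt_one 1 hx
  have h0 := summable_norm_pow_mul_geometric_of_norm_lt_one 0 hx
  refine Summable.of_nonneg_of_le (fun _ => norm_nonneg _) (fun k => ?_) (h1.add h0)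
  calc ‖((k : ℂ) + 1) * x ^ k‖ = ‖(k : ℂ) ^ 1 * x ^ k + (k : ℂ) ^ 0 * x ^ k‖ := by
        congr 1
        ring
    _ ≤ _ := norm_add_le _ _

lemma summable_norm_mul_of_bounded {ι : Type*} {f v : ι → ℂ} {C : ℝ}
    (hf : Summable (fun i => ‖f i‖)) (hv : ∀ i, ‖v i‖ ≤ C) :
    Summable (fun i => ‖f i * v i‖) := by
  refine Summable.of_nonneg_of_le (fun _ => norm_nonneg _) (fun i => ?_) (hf.mul_right C)
  rw [norm_mul]
  exact mul_le_mul_of_nonneg_left (hv i) (norm_nonneg _)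

/-- For `α β : ℂ` with `‖α‖ < 1`, `‖β‖ < 1`, and a bounded symmetric
sequence `u : ℤ → ℂ`, the double series `∑_{n,m ≥ 1} n m α^{n-1} β^{m-1} u (n - m)`
converges absolutely and equals
`((1+αβ)/(1-αβ)^3) (u 0 + ∑_{Δ≥1} (α^Δ + β^Δ) u Δ) + (1/(1-αβ)^2) ∑_{Δ≥1} Δ (α^Δ + β^Δ) u Δ`.
Indices `n, m ≥ 1` are encoded as `n = p.1 + 1`, `m = p.2 + 1` with `p : ℕ × ℕ`. -/
theorem stmt_1 (α β : ℂ) (hα : ‖α‖ < 1) (hβ : ‖β‖ < 1)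
    (u : ℤ → ℂ) (hbdd : ∃ C : ℝ, ∀ n : ℤ, ‖u n‖ ≤ C)
    (hsymm : ∀ n : ℤ, u (-n) = u n) :
    Summable (fun p : ℕ × ℕ =>
      ‖((p.1 : ℂ) + 1) * ((p.2 : ℂ) + 1) * α ^ p.1 * β ^ p.2 * u ((p.1 : ℤ) - (p.2 : ℤ))‖) ∧
      ∑' p : ℕ × ℕ,
          ((p.1 : ℂ) + 1) * ((p.2 : ℂ) + 1) * α ^ p.1 * β ^ p.2 * u ((p.1 : ℤ) - (p.2 : ℤ)) =
        ((1 + α * β) / (1 - α * β) ^ 3) *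
            (u 0 + ∑' Δ : ℕ, (α ^ (Δ + 1) + β ^ (Δ + 1)) * u ((Δ : ℤ) + 1)) +
          (1 / (1 - α * β) ^ 2) *
            ∑' Δ : ℕ, ((Δ : ℂ) + 1) * (α ^ (Δ + 1) + β ^ (Δ + 1)) * u ((Δ : ℤ) + 1) := by
  obtain ⟨C, hC⟩ := hbdd
  have hq : ‖α * β‖ < 1 := by
    rw [norm_mul]
    exact mul_lt_one_of_nonneg_of_lt_one_left (norm_nonneg _) hα hβ.le
  set F : ℕ × ℕ → ℂ := fun p =>
    ((p.1 : ℂ) + 1) * ((p.2 : ℂ) + 1) * α ^ p.1 * β ^ p.2 * u ((p.1 : ℤ) - (p.2 : ℤ)) with hF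
  have hFn : Summable (fun p => ‖F p‖) := by
    have h := summable_norm_mul_of_bounded (v := fun p : ℕ × ℕ => u ((p.1 : ℤ) - (p.2 : ℤ)))
      ((summable_norm_add_one_mul_pow hα).mul_norm (summable_norm_add_one_mul_pow hβ))
      (fun p => hC _)
    refine h.congr fun p => ?_
    simp only [hF]
    congr 1
    ring
  refine ⟨hFn, ?_⟩
  have hS : Summable (F ∘ diagEquiv) := (diagEquiv.summable_iff).2 hFn.of_norm
  have hl : Summable ((F ∘ diagEquiv) ∘ Sum.inl) := hS.comp_injective Sum.inl_injective
  have hr : Summable ((F ∘ diagEquiv) ∘ Sum.inr) := hS.comp_injective Sum.inr_injective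
  set A : ℂ := (1 + α * β) / (1 - α * β) ^ 3 with hA
  set B : ℂ := 1 / (1 - α * β) ^ 2 with hB
  have hl' := hl.hasSum.prod_fiberwise (g := fun d : ℕ => (A + d * B) * (α ^ d * u d)) (by
    intro d
    refine ((hasSum_diag hq (d : ℂ)).mul_right (α ^ d * u d)).congr_fun ?_
    intro k
    have hu : (((k + d : ℕ) : ℤ) - (k : ℤ)) = d := by push_cast; ring
    simp only [hF, Function.comp, diagEquiv, Equiv.coe_fn_mk, Sum.elim_inl, hu]
    push_cast
    ring)
  have hr' := hr.hasSum.prod_fiberwise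
    (g := fun d : ℕ => (A + ((d : ℂ) + 1) * B) * (β ^ (d + 1) * u ((d : ℤ) + 1))) (by
    intro d
    refine ((hasSum_diag hq ((d : ℂ) + 1)).mul_right
      (β ^ (d + 1) * u ((d : ℤ) + 1))).congr_fun ?_
    intro k
    have hu : ((k : ℤ) - ((k + d + 1 : ℕ) : ℤ)) = -((d : ℤ) + 1) := by push_cast; ring
    simp only [hF, Function.comp, diagEquiv, Equiv.coe_fn_mk, Sum.elim_inr, hu, hsymm]
    push_cast
    ring)
  have hpow : ∀ {x : ℂ}, ‖x‖ < 1 →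
      Summable (fun d : ℕ => x ^ (d + 1) * u ((d : ℤ) + 1)) := by
    intro x hx
    have h := (summable_norm_mul_of_bounded (v := fun d : ℕ => u ((d : ℤ) + 1))
      (summable_norm_geometric_of_norm_lt_one hx) (fun _ => hC _)).of_norm.mul_left x
    refine h.congr fun d => ?_
    ring
  have hlin : ∀ {x : ℂ}, ‖x‖ < 1 →
      Summable (fun d : ℕ => ((d : ℂ) + 1) * (x ^ (d + 1) * u ((d : ℤ) + 1))) := by
    intro x hx
    have h := (summable_norm_mul_of_bounded (v := fun d : ℕ => u ((d : ℤ) + 1))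
      (summable_norm_add_one_mul_pow hx) (fun _ => hC _)).of_norm.mul_left x
    refine h.congr fun d => ?_
    ring
  have h1 := ((hpow hα).add (hpow hβ)).hasSum
  have h2 := ((hlin hα).add (hlin hβ)).hasSum
  have e1 : ∑' Δ : ℕ, (α ^ (Δ + 1) + β ^ (Δ + 1)) * u ((Δ : ℤ) + 1) =
      ∑' d : ℕ, (α ^ (d + 1) * u ((d : ℤ) + 1) + β ^ (d + 1) * u ((d : ℤ) + 1)) :=
    tsum_congr fun d => by ring
  have e2 : ∑' Δ : ℕ, ((Δ : ℂ) + 1) * (α ^ (Δ + 1) + β ^ (Δ + 1)) * u ((Δ : ℤ) + 1) =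
      ∑' d : ℕ, (((d : ℂ) + 1) * (α ^ (d + 1) * u ((d : ℤ) + 1)) +
        ((d : ℂ) + 1) * (β ^ (d + 1) * u ((d : ℤ) + 1))) :=
    tsum_congr fun d => by ring
  -- The main diagonal `d = 0` is split off, so that both halves are indexed by `d + 1 ≥ 1`.
  have hl'' := (hasSum_nat_add_iff' 1).2 hl'
  have hsum := (hl''.add hr').unique
    (((h1.mul_left A).add (h2.mul_left B)).congr_fun fun d => by push_cast; ring)
  rw [e1, e2, ← diagEquiv.tsum_eq F]
  have htot := Summable.tsum_sum hl hr
  simp only [Function.comp_def] at htot hsum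
  rw [htot]
  simp at hsum
  linear_combination hsum
end
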